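/- arXiv:1608.01463 — 2 statements merged into one kernel-verified Lean document; each statement's English description precedes it below -/
import Mathlib

section
/- Let G=(V,E) be a multigraph without self-loops, let s ∈ V, let x be a half-integral minimum s-cycle cover of G, and let G'=(V,E') be the multigraph obtained from G by applying the s-cycle cover reduction with respect to s and x. Then fvs(G) = fvs(G'). -/
/-- A multigraph on vertex type `V` with edge type `E`: each edge has an
unordered pair of endpoints.  Parallel edges are distinguished (they are
different elements of `E`), and self-loops are edges whose endpoint pair is
diagonal. -/
structure Multigraph (V : Type) (E : Type) where
  ends : E → Sym2 V

namespace Multigraph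

variable {V E : Type}

/-- A multigraph has no self-loops. -/
def LoopFree (G : Multigraph V E) : Prop := ∀ e : E, ¬ (G.ends e).IsDiag

/-- The degree of a vertex: the number of incident edges (parallel edges
counted with multiplicity). -/
noncomputable def degree (G : Multigraph V E) (v : V) : ℕ :=
  Nat.card {e : E // v ∈ G.ends e}

/-- A walk `(v₀, e₁, v₁, …, e_l, v_l)` of positive length `l ≥ 1` in which
each edge `eᵢ` joins `v_{i-1}` and `vᵢ`. -/
structure Walk (G : Multigraph V E) where
  len : ℕ
  len_pos : 0 < len
  verts : Fin (len + 1) → V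
  edges : Fin len → E
  valid : ∀ i : Fin len, G.ends (edges i) = s(verts i.castSucc, verts i.succ)

namespace Walk

variable {G : Multigraph V E}

/-- The first vertex of a walk. -/
def start (W : G.Walk) : V := W.verts 0

/-- The last vertex of a walk. -/
def finish (W : G.Walk) : V := W.verts (Fin.last W.len)

/-- A cycle: a closed walk of positive length with pairwise distinct edges and
pairwise distinct vertices (except that the first and last vertex coincide). -/
def IsCycle (W : G.Walk) : Prop :=
  W.start = W.finish ∧ Function.Injective W.edges ∧
    Function.Injective fun i : Fin W.len => W.verts i.castSucc

/-- An `s`-cycle: a walk with `v₀ = v_l = s`, with `vᵢ ≠ s` for `0 < i < l`,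
with no U-turns (`eᵢ ≠ e_{i+1}`), and in which every edge occurs at most
twice. -/
def IsSCycle (W : G.Walk) (s : V) : Prop :=
  W.start = s ∧ W.finish = s ∧
  (∀ i : Fin (W.len + 1), i ≠ 0 → i ≠ Fin.last W.len → W.verts i ≠ s) ∧
  (∀ i j : Fin W.len, (i : ℕ) + 1 = (j : ℕ) → W.edges i ≠ W.edges j) ∧
  (∀ e : E, Nat.card {i : Fin W.len // W.edges i = e} ≤ 2)

/-- The multiplicity of a vertex `v` in the multiset `V(W)` of vertices of a
walk `W`. -/
noncomputable def vertCount (W : G.Walk) (v : V) : ℕ :=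
  Nat.card {i : Fin (W.len + 1) // W.verts i = v}

end Walk

/-- `S` is a feedback vertex set: every cycle of `G` meets `S`
(equivalently, `G − S` contains no cycle). -/
def IsFVS (G : Multigraph V E) (S : Set V) : Prop :=
  ∀ W : G.Walk, W.IsCycle → ∃ i, W.verts i ∈ S

/-- The minimum size of a feedback vertex set. -/
noncomputable def fvs [Fintype V] (G : Multigraph V E) : ℕ :=
  sInf {n : ℕ | ∃ S : Set V, G.IsFVS S ∧ S.ncard = n}

/-- `x : V → ℝ≥0` is an `s`-cycle cover: `x s = 0` and every `s`-cycle `C`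
satisfies `x(V(C)) ≥ 1` (vertices counted with multiplicity). -/
def IsSCycleCover (G : Multigraph V E) (s : V) (x : V → ℝ) : Prop :=
  (∀ v, 0 ≤ x v) ∧ x s = 0 ∧
    ∀ W : G.Walk, W.IsSCycle s → 1 ≤ ∑ i, x (W.verts i)

/-- A function is half-integral if it takes values in `{0, 1/2, 1}`. -/
def HalfIntegral (x : V → ℝ) : Prop := ∀ v, x v = 0 ∨ x v = 1/2 ∨ x v = 1

/-- A minimum `s`-cycle cover. -/
def IsMinSCycleCover [Fintype V] (G : Multigraph V E) (s : V) (x : V → ℝ) : Prop :=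
  G.IsSCycleCover s x ∧ ∀ x' : V → ℝ, G.IsSCycleCover s x' → ∑ v, x v ≤ ∑ v, x' v

/-- An `s`-cycle packing: a nonnegative, finitely supported weighting of the
`s`-cycles such that every vertex `v ≠ s` is used (with multiplicity) with
total weight at most `1`. -/
def IsSCyclePacking (G : Multigraph V E) (s : V) (y : G.Walk →₀ ℝ) : Prop :=
  (∀ W, 0 ≤ y W) ∧ (∀ W, y W ≠ 0 → W.IsSCycle s) ∧
    ∀ v : V, v ≠ s → ∑ W ∈ y.support, (W.vertCount v : ℝ) * y W ≤ 1

/-- The size of an `s`-cycle packing. -/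
noncomputable def packingSize {G : Multigraph V E} (y : G.Walk →₀ ℝ) : ℝ :=
  ∑ W ∈ y.support, y W

/-- Number of edges incident to `v` with `f`-value 1. -/
noncomputable def cnt1 (G : Multigraph V E) (f : E → ℝ) (v : V) : ℕ :=
  Nat.card {e : E // v ∈ G.ends e ∧ f e = 1}

/-- Number of edges incident to `v` with `f`-value 1/2. -/
noncomputable def cntH (G : Multigraph V E) (f : E → ℝ) (v : V) : ℕ :=
  Nat.card {e : E // v ∈ G.ends e ∧ f e = 1/2}

/-- type-O: all incident edges have `f`-value 0. -/
def IsTypeO (G : Multigraph V E) (f : E → ℝ) (v : V) : Prop :=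
  ∀ e : E, v ∈ G.ends e → f e = 0

/-- type-I: exactly two incident edges have value 1 and none has value 1/2. -/
def IsTypeI (G : Multigraph V E) (f : E → ℝ) (v : V) : Prop :=
  G.cnt1 f v = 2 ∧ G.cntH f v = 0

/-- type-H: no incident edge has value 1 and exactly two have value 1/2. -/
def IsTypeH (G : Multigraph V E) (f : E → ℝ) (v : V) : Prop :=
  G.cnt1 f v = 0 ∧ G.cntH f v = 2

/-- type-T: exactly one incident edge has value 1 and exactly two have value 1/2. -/
def IsTypeT (G : Multigraph V E) (f : E → ℝ) (v : V) : Prop :=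
  G.cnt1 f v = 1 ∧ G.cntH f v = 2

/-- A basic `s`-cycle packing: `f : E → {0,1/2,1}` with `f(e) ∈ {0,1}` on edges
incident to `s`, every vertex `v ≠ s` of one of the four types O, I, H, T, and
every cycle consisting of edges of value 1/2 (i.e. every half-integral cycle)
containing an odd number of type-T vertices. -/
def IsBasicSCyclePacking (G : Multigraph V E) (s : V) (f : E → ℝ) : Prop :=
  (∀ e : E, f e = 0 ∨ f e = 1/2 ∨ f e = 1) ∧
  (∀ e : E, s ∈ G.ends e → f e = 0 ∨ f e = 1) ∧
  (∀ v : V, v ≠ s →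
    G.IsTypeO f v ∨ G.IsTypeI f v ∨ G.IsTypeH f v ∨ G.IsTypeT f v) ∧
  (∀ W : G.Walk, W.IsCycle → (∀ j, f (W.edges j) = 1/2) →
    Odd (Nat.card {i : Fin W.len // G.IsTypeT f (W.verts i.castSucc)}))

/-- The size of a basic `s`-cycle packing: `(1/2) · Σ_{e ∈ δ(s)} f(e)`. -/
noncomputable def basicSize [Fintype E] (G : Multigraph V E) (s : V) (f : E → ℝ) : ℝ :=
  (1/2) * ∑ e : E, Set.indicator {e' : E | s ∈ G.ends e'} f e

/-- `u` and `v` are connected by a walk avoiding the vertex set `S` and the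
edge set `F` (or `u = v`). -/
def Reach (G : Multigraph V E) (S : Set V) (F : Set E) (u v : V) : Prop :=
  u = v ∨ ∃ W : G.Walk, (∀ i, W.verts i ∉ S) ∧ (∀ j, W.edges j ∉ F) ∧
    W.start = u ∧ W.finish = v

/-- The edge `e` belongs to the set `B` of the `s`-cycle cover reduction with
respect to the set `X`: `e` joins `s` to some `u ∉ X`, `e` is a bridge of
`G − X` (its endpoints are disconnected in `G − X − e`), and the connected
component of `u` in `G − X − s` is a tree (no cycle of `G − X − s` passes
through a vertex reachable from `u` in `G − X − s`). -/
def InB (G : Multigraph V E) (s : V) (X : Set V) (e : E) : Prop :=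
  ∃ u : V, G.ends e = s(s, u) ∧ u ≠ s ∧ u ∉ X ∧ s ∉ X ∧
    ¬ G.Reach X {e} s u ∧
    ¬ ∃ W : G.Walk, W.IsCycle ∧ (∀ i, W.verts i ∉ X ∪ {s}) ∧
        G.Reach (X ∪ {s}) ∅ u W.start

/-- The graph `G' = (V, E')` obtained from `G` by the `s`-cycle cover
reduction with respect to a half-integral `s`-cycle cover `x`: with
`X = x⁻¹(1)`, insert a double edge (two new parallel edges) between `s` and
each `v ∈ X`, and delete the edges of `B`. -/
def reduced (G : Multigraph V E) (s : V) (x : V → ℝ) :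
    Multigraph V ({e : E // ¬ G.InB s {v : V | x v = 1} e} ⊕ ({v : V // x v = 1} × Bool)) where
  ends := fun e =>
    match e with
    | .inl e' => G.ends e'.val
    | .inr p => s(s, p.1.val)

/-- The graph `G − s` obtained by deleting the vertex `s` and all incident
edges (the vertex `s` is kept as an isolated vertex). -/
def deleteVertex (G : Multigraph V E) (s : V) :
    Multigraph V {e : E // s ∉ G.ends e} where
  ends := fun e => G.ends e.val

/-- An `f`-augmenting walk for a basic `s`-cycle packing `f`:
(1) it starts at `s`; (2) its first edge has value 0; (3) its edges are
pairwise distinct; (4) its vertices `v₀,…,v_{l-1}` are pairwise distinct;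
(5) each interior vertex `vᵢ` (`1 ≤ i ≤ l-1`) is type-O, or type-I with
`f(e) = 1` for at least one of `e ∈ {eᵢ, e_{i+1}}`; (6) if the last vertex
`v_l` equals `vᵢ` for some `i < l` then: `v_l = s` and `f(e_l) = 0`, or `v_l`
is type-O, or `v_l` is type-I and `f(e) = 1` for at least one of
`e ∈ {eᵢ, e_l}`; (7) if `v_l` is a new vertex then it is type-H or type-T. -/
def IsAugmentingWalk (G : Multigraph V E) (s : V) (f : E → ℝ) (W : G.Walk) : Prop :=
  W.start = s ∧
  f (W.edges ⟨0, W.len_pos⟩) = 0 ∧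
  Function.Injective W.edges ∧
  Function.Injective (fun i : Fin W.len => W.verts i.castSucc) ∧
  (∀ i : Fin W.len, 0 < i.val →
    (G.IsTypeO f (W.verts i.castSucc) ∨
      (G.IsTypeI f (W.verts i.castSucc) ∧
        (f (W.edges ⟨i.val - 1, Nat.lt_of_le_of_lt (Nat.sub_le _ _) i.isLt⟩) = 1 ∨
          f (W.edges i) = 1)))) ∧
  (∀ i : Fin W.len, W.finish = W.verts i.castSucc →
    ((W.finish = s ∧ f (W.edges ⟨W.len - 1, Nat.sub_lt W.len_pos Nat.one_pos⟩) = 0) ∨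
     (W.finish ≠ s ∧ G.IsTypeO f W.finish) ∨
     (W.finish ≠ s ∧ G.IsTypeI f W.finish ∧
       (f (W.edges ⟨i.val - 1, Nat.lt_of_le_of_lt (Nat.sub_le _ _) i.isLt⟩) = 1 ∨
         f (W.edges ⟨W.len - 1, Nat.sub_lt W.len_pos Nat.one_pos⟩) = 1)))) ∧
  ((∀ i : Fin W.len, W.finish ≠ W.verts i.castSucc) →
    (G.IsTypeH f W.finish ∨ G.IsTypeT f W.finish))

/-- `g = f_W` is obtained from `f` by augmenting along the walk `W`.
If `v_l = s` (so `h = l`), the values of `f` on `e₁,…,e_l` are flipped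
(`f ↦ 1 − f`).  If `v_l ≠ s` equals an earlier vertex `vᵢ` (so `h = i`), the
values on `e₁,…,e_h` are flipped and the values on `e_{h+1},…,e_l` are set to
`1/2`.  If `v_l ≠ s` is a new vertex (type-H or type-T, with `h = l`), the
values on `e₁,…,e_l` are flipped and, on the half-integral cycle `C` of `v_l`
(traversed from `t₀ = v_l` in either direction), the edges of the segment
`Pᵢ` between consecutive markers `tᵢ, t_{i+1}` (the markers being `v_l`
together with the type-T vertices of `C`) receive value `0` for even `i` and
`1` for odd `i`; the segment index of an edge is the number of type-T
vertices strictly preceding it along the traversal.  All other edges keep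
their `f`-value. -/
def AugmentedAlong (G : Multigraph V E) (s : V) (f : E → ℝ) (W : G.Walk) (g : E → ℝ) : Prop :=
  -- Case A : the walk returns to `s`.
  (W.finish = s ∧
    (∀ j : Fin W.len, g (W.edges j) = 1 - f (W.edges j)) ∧
    (∀ e : E, (∀ j, e ≠ W.edges j) → g e = f e)) ∨
  -- Case B : the last vertex is a repeated vertex `vᵢ ≠ s` (type-O or type-I).
  (W.finish ≠ s ∧
    (∃ i : Fin W.len, W.finish = W.verts i.castSucc ∧
      (∀ j : Fin W.len, j.val < i.val → g (W.edges j) = 1 - f (W.edges j)) ∧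
      (∀ j : Fin W.len, i.val ≤ j.val → g (W.edges j) = 1/2) ∧
      (∀ e : E, (∀ j, e ≠ W.edges j) → g e = f e))) ∨
  -- Case C : the last vertex is a new vertex of type-H or type-T.
  (W.finish ≠ s ∧ (∀ i : Fin W.len, W.finish ≠ W.verts i.castSucc) ∧
    (∃ C : G.Walk, C.IsCycle ∧ C.verts 0 = W.finish ∧
      (∀ j, f (C.edges j) = 1/2) ∧
      (∀ j : Fin W.len, g (W.edges j) = 1 - f (W.edges j)) ∧
      (∀ j : Fin C.len,
        g (C.edges j) =
          if Even (Nat.card {m : Fin C.len //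
              1 ≤ m.val ∧ m.val ≤ j.val ∧ G.IsTypeT f (C.verts m.castSucc)})
          then 0 else 1) ∧
      (∀ e : E, (∀ j, e ≠ W.edges j) → (∀ j, e ≠ C.edges j) → g e = f e)))


end Multigraph

/-!
Let `X = x⁻¹(1)`. A feedback vertex set `S` of `G'` contains `s` or, because of the double edges,
all of `X`. A cycle of `G` that survives in `G'` is hit by `S`; any other one uses an edge of `B`,
so it passes through `s`, and also through `X` because edges of `B` are bridges of `G - X`. Hence
`S` is a feedback vertex set of `G`.

Conversely, a feedback vertex set of `G` that contains `s` or `X` is one of `G'`, so it remains to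
exchange a feedback vertex set `S` of `G` with `s ∉ S` for one that contains `X` and is not larger.
Let `Z` be the set of vertices reached from `s` through zeros of `x`, and `R ⊆ Z` the set of those
reached through zeros outside `S`. In `S`, trade the vertices of `S ∩ Z` for `X` and for the
vertices of value `1/2` without an edge to `R`.

* The size does not increase. The vertices outside `R` carry an `s`-cycle cover `y` of value `1` at
  those with at least two edges to `R` and `1/2` at those with exactly one. Vertex by vertex,
  `2 (y - x)` is at most the indicator of `S` minus the indicator of the exchanged set, and
  `y(V) ≥ x(V)` by minimality of `x`.
* A cycle that avoids the exchanged set meets `S`, hence `Z \ R`, and it cannot lie inside `Z`. A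
  part of it is then a path through `Z \ R` with both ends in `R`, and closing this path up inside
  `R` contradicts that `x` is an `s`-cycle cover.
-/

namespace Multigraph

variable {V E : Type} {G : Multigraph V E}

/-! ### Walks as lists of darts -/

/-- An edge together with one of its orientations. Walks are handled as lists of darts, which can be
cut, glued and reversed more easily than the `Fin`-indexed sequences of `Multigraph.Walk`. -/
@[ext]
structure Dart (G : Multigraph V E) where
  fst : V
  edge : E
  snd : V
  ends_edge : G.ends edge = s(fst, snd)

namespace Dart

/-- The same edge with the opposite orientation. -/
def symm (d : G.Dart) : G.Dart := ⟨d.snd, d.edge, d.fst, d.ends_edge.trans Sym2.eq_swap⟩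

lemma eq_or_eq_symm_of_edge_eq {d d' : G.Dart} (h : d.edge = d'.edge) : d = d' ∨ d = d'.symm := by
  have hends : s(d.fst, d.snd) = s(d'.fst, d'.snd) := by
    rw [← d.ends_edge, h, d'.ends_edge]
  rcases Sym2.eq_iff.1 hends with ⟨hfst, hsnd⟩ | ⟨hfst, hsnd⟩
  · exact .inl (Dart.ext hfst h hsnd)
  · exact .inr (Dart.ext hfst h hsnd)

end Dart

/-- `G.IsWalk u L v`: the darts of the list `L` form a walk from `u` to `v`, where the empty list is
the walk of length `0`. -/
def IsWalk (G : Multigraph V E) : V → List G.Dart → V → Prop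
  | u, [], v => u = v
  | u, d :: L, v => d.fst = u ∧ G.IsWalk d.snd L v

/-- `G.IsReducedWalk u L v`: the list `L` is a walk from `u` to `v` without U-turns. -/
structure IsReducedWalk (G : Multigraph V E) (u : V) (L : List G.Dart) (v : V) : Prop where
  isWalk : G.IsWalk u L v
  isChain : L.IsChain (·.edge ≠ ·.edge)

/-- `G.IsCircuit u L`: the list `L` is a nonempty closed walk at `u` with distinct edges. -/
structure IsCircuit (G : Multigraph V E) (u : V) (L : List G.Dart) : Prop where
  isWalk : G.IsWalk u L u
  ne_nil : L ≠ []
  nodup_edge : (L.map Dart.edge).Nodup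

variable {u v w a b s : V} {A B L : List G.Dart} {d : G.Dart}

lemma isWalk_append : G.IsWalk u (A ++ B) v ↔ ∃ w, G.IsWalk u A w ∧ G.IsWalk w B v := by
  induction A generalizing u with
  | nil => simp [IsWalk]
  | cons d A ih => simp [IsWalk, ih, and_assoc]

lemma IsWalk.append (hA : G.IsWalk u A w) (hB : G.IsWalk w B v) : G.IsWalk u (A ++ B) v :=
  isWalk_append.2 ⟨w, hA, hB⟩

lemma IsWalk.reverse (h : G.IsWalk u L v) : G.IsWalk v (L.map Dart.symm).reverse u := by
  induction L generalizing u with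
  | nil => exact h.symm
  | cons d L ih =>
    rw [List.map_cons, List.reverse_cons]
    exact (ih h.2).append ⟨rfl, h.1⟩

lemma IsWalk.map_fst_concat (h : G.IsWalk u L v) :
    L.map Dart.fst ++ [v] = u :: L.map Dart.snd := by
  induction L generalizing u with
  | nil => simpa using Eq.symm h
  | cons d L ih => simp [ih h.2, h.1]

lemma IsWalk.fst_mem (h : G.IsWalk u L v) (hd : d ∈ L) : d.fst ∈ u :: L.map Dart.snd := by
  rw [← h.map_fst_concat]
  exact List.mem_append_left _ (List.mem_map_of_mem hd)

lemma IsWalk.mem_map_snd (h : G.IsWalk u L v) (hne : L ≠ []) : v ∈ L.map Dart.snd := by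
  have hlast := congrArg List.getLast? h.map_fst_concat
  rw [List.getLast?_concat, List.getLast?_cons_of_ne_nil (by simpa using hne)] at hlast
  exact List.mem_of_getLast? hlast.symm

lemma IsWalk.map_fst_perm_map_snd (h : G.IsWalk u L u) : (L.map Dart.fst).Perm (L.map Dart.snd) :=
  (h.map_fst_concat ▸ (List.perm_append_singleton u (L.map Dart.fst)).symm :
    (u :: L.map Dart.fst).Perm (u :: L.map Dart.snd)).cons_inv

lemma IsWalk.forall_fst_of_forall_snd {p : V → Prop} (h : G.IsWalk u L u)
    (hp : ∀ d ∈ L, p d.snd) : ∀ d ∈ L, p d.fst := fun _ hd =>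
  have hpL : ∀ w ∈ L.map Dart.snd, p w := List.forall_mem_map.2 hp
  hpL _ (h.map_fst_perm_map_snd.subset (List.mem_map_of_mem hd))

lemma IsReducedWalk.of_cons (h : G.IsReducedWalk u (d :: L) v) : G.IsReducedWalk d.snd L v :=
  ⟨h.isWalk.2, h.isChain.tail⟩

lemma IsReducedWalk.reverse (h : G.IsReducedWalk u L v) :
    G.IsReducedWalk v (L.map Dart.symm).reverse u := by
  refine ⟨h.isWalk.reverse, ?_⟩
  rw [List.isChain_reverse, List.isChain_map]
  exact h.isChain.imp fun _ _ hne => hne.symm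

lemma isReducedWalk_singleton (d : G.Dart) : G.IsReducedWalk d.fst [d] d.snd :=
  ⟨⟨rfl, rfl⟩, List.isChain_singleton _⟩

lemma IsReducedWalk.append_append (hA : G.IsReducedWalk u A a) (hL : G.IsReducedWalk a L b)
    (hB : G.IsReducedWalk b B v) (hne : L ≠ []) (hAL : ∀ d ∈ A, ∀ d' ∈ L, d.edge ≠ d'.edge)
    (hLB : ∀ d ∈ L, ∀ d' ∈ B, d.edge ≠ d'.edge) : G.IsReducedWalk u (A ++ L ++ B) v := by
  refine ⟨(hA.isWalk.append hL.isWalk).append hB.isWalk, List.IsChain.append_overlap ?_ ?_ hne⟩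
  · exact List.isChain_append.2 ⟨hA.isChain, hL.isChain, fun d hd d' hd' =>
      hAL d (List.mem_of_mem_getLast? hd) d' (List.mem_of_mem_head? hd')⟩
  · exact List.isChain_append.2 ⟨hL.isChain, hB.isChain, fun d hd d' hd' =>
      hLB d (List.mem_of_mem_getLast? hd) d' (List.mem_of_mem_head? hd')⟩

lemma IsCircuit.isReducedWalk (h : G.IsCircuit u L) : G.IsReducedWalk u L u :=
  ⟨h.isWalk, (List.pairwise_map.1 h.nodup_edge).isChain⟩

lemma IsCircuit.exists_perm_cons (h : G.IsCircuit u L) (hd : d ∈ L) :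
    ∃ L', G.IsCircuit d.fst (d :: L') ∧ (d :: L').Perm L := by
  obtain ⟨A, B, rfl⟩ := List.append_of_mem hd
  obtain ⟨w, hA, hdw, hB⟩ := isWalk_append.1 h.isWalk
  have hperm : (d :: (B ++ A)).Perm (A ++ d :: B) := List.perm_append_comm (l₁ := d :: B)
  refine ⟨B ++ A, ⟨⟨rfl, hB.append (hdw ▸ hA)⟩, by simp, ?_⟩, hperm⟩
  exact (hperm.map Dart.edge).nodup_iff.2 h.nodup_edge

lemma IsCircuit.exists_perm (h : G.IsCircuit u L) (hv : v ∈ L.map Dart.snd) :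
    ∃ L', G.IsCircuit v L' ∧ L'.Perm L := by
  obtain ⟨d, hd, rfl⟩ := List.mem_map.1 (h.isWalk.map_fst_perm_map_snd.mem_iff.2 hv)
  obtain ⟨L', hL', hperm⟩ := h.exists_perm_cons hd
  exact ⟨d :: L', hL', hperm⟩

lemma IsWalk.exists_prefix_not (p : V → Prop) (h : G.IsWalk u L v) (hv : ¬ p v) :
    ∃ K w, K <+: L ∧ G.IsWalk u K w ∧ ¬ p w ∧ ∀ d ∈ K, p d.fst := by
  induction L generalizing u with
  | nil => exact ⟨[], v, List.nil_prefix, h, hv, by simp⟩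
  | cons d L ih =>
    obtain ⟨rfl, hL⟩ := h
    by_cases hd : p d.fst
    · obtain ⟨K, w, hKL, hK, hw, hpK⟩ := ih hL
      exact ⟨d :: K, w, List.cons_prefix_cons.2 ⟨rfl, hKL⟩, ⟨rfl, hK⟩, hw,
        List.forall_mem_cons.2 ⟨hd, hpK⟩⟩
    · exact ⟨[], d.fst, List.nil_prefix, rfl, hd, by simp⟩

lemma IsReducedWalk.exists_infix_of_mem {p : V → Prop} (h : G.IsReducedWalk u L v) (hu : ¬ p u)
    (hv : ¬ p v) (hd : d ∈ L) (hpd : p d.snd) :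
    ∃ K a b, K <:+: L ∧ K ≠ [] ∧ G.IsReducedWalk a K b ∧ ¬ p a ∧ ¬ p b ∧
      ∀ f ∈ K, p f.fst ∨ p f.snd := by
  induction L generalizing u with
  | nil => simp at hd
  | cons f L ih =>
    have hfu : f.fst = u := h.isWalk.1
    by_cases hf : p f.snd
    · obtain ⟨K, w, hKL, hK, hw, hpK⟩ := h.isWalk.2.exists_prefix_not p hv
      have hinfix : f :: K <:+: f :: L := (List.cons_prefix_cons.2 ⟨rfl, hKL⟩).isInfix
      refine ⟨f :: K, u, w, hinfix, by simp, ⟨⟨hfu, hK⟩, h.isChain.infix hinfix⟩, hu, hw, ?_⟩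
      rintro g (_ | ⟨_, hg⟩)
      exacts [.inr hf, .inl (hpK g hg)]
    · have hdL : d ∈ L := (List.mem_cons.1 hd).resolve_left (by rintro rfl; exact hf hpd)
      obtain ⟨K, a, b, hKL, hK⟩ := ih h.of_cons hf hdL
      exact ⟨K, a, b, hKL.trans (List.suffix_cons f L).isInfix, hK⟩

lemma IsReducedWalk.exists_nodup_sublist (h : G.IsReducedWalk u L v) :
    ∃ L', L'.Sublist L ∧ L'.head? = L.head? ∧ L'.Nodup ∧ G.IsReducedWalk u L' v := by
  induction L generalizing u with
  | nil => exact ⟨[], List.Sublist.refl _, rfl, List.nodup_nil, h⟩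
  | cons d L ih =>
    obtain ⟨rfl, -⟩ := h.isWalk
    obtain ⟨L', hsub, hhead, hnodup, hL'⟩ := ih h.of_cons
    by_cases hd : d ∈ L'
    · obtain ⟨A, B, rfl⟩ := List.append_of_mem hd
      have hsuffix : d :: B <:+ A ++ d :: B := List.suffix_append _ _
      obtain ⟨-, -, -, hB⟩ := isWalk_append.1 hL'.isWalk
      exact ⟨d :: B, (hsuffix.sublist.trans hsub).cons d, rfl, hnodup.sublist hsuffix.sublist,
        ⟨rfl, hB⟩, hL'.isChain.suffix hsuffix⟩
    · have hchain : (d :: L').IsChain (·.edge ≠ ·.edge) := by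
        rw [List.isChain_cons, hhead]
        exact ⟨(List.isChain_cons.1 h.isChain).1, hL'.isChain⟩
      exact ⟨d :: L', hsub.cons_cons d, rfl, List.nodup_cons.2 ⟨hd, hnodup⟩,
        ⟨rfl, hL'.isWalk⟩, hchain⟩

lemma IsReducedWalk.nodup_edge (h : G.IsReducedWalk u L v) (hL : (L.map Dart.snd).Nodup) :
    (L.map Dart.edge).Nodup := by
  induction L generalizing u with
  | nil => simp
  | cons d L ih =>
    rw [List.map_cons, List.nodup_cons] at hL ⊢
    refine ⟨fun hmem => ?_, ih h.of_cons hL.2⟩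
    obtain ⟨d', hd', hedge⟩ := List.mem_map.1 hmem
    rcases Dart.eq_or_eq_symm_of_edge_eq hedge with rfl | rfl
    · exact hL.1 (List.mem_map_of_mem hd')
    · -- `d` reversed cannot follow `d` at once, and later it would revisit `d.snd`.
      cases L with
      | nil => simp at hd'
      | cons f M =>
        rcases List.mem_cons.1 hd' with hf | hM
        · exact (List.isChain_cons_cons.1 h.isChain).1 (hf ▸ rfl)
        · exact hL.1 (h.isWalk.2.2.fst_mem hM)

lemma IsReducedWalk.exists_infix_closed (h : G.IsReducedWalk u L v)
    (hL : ¬ (u :: L.map Dart.snd).Nodup) :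
    ∃ K w, K <:+: L ∧ K ≠ [] ∧ G.IsReducedWalk w K w ∧ (K.map Dart.snd).Nodup := by
  induction L generalizing u with
  | nil => simp at hL
  | cons d L ih =>
    obtain ⟨rfl, -⟩ := h.isWalk
    by_cases hnodup : (d.snd :: L.map Dart.snd).Nodup
    · have hmem : d.fst ∈ (d :: L).map Dart.snd := by
        by_contra hmem
        exact hL (List.nodup_cons.2 ⟨hmem, hnodup⟩)
      obtain ⟨f, hf, hfd⟩ := List.mem_map.1 hmem
      obtain ⟨A, B, hAB⟩ := List.append_of_mem hf
      have hprefix : A ++ [f] <+: d :: L := ⟨B, by simp [hAB]⟩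
      have hclosed : G.IsWalk d.fst (A ++ [f]) d.fst := by
        obtain ⟨w, hA, hfw, -⟩ := isWalk_append.1 (hAB ▸ h.isWalk)
        exact hA.append ⟨hfw, hfd⟩
      exact ⟨A ++ [f], d.fst, hprefix.isInfix, by simp,
        ⟨hclosed, h.isChain.infix hprefix.isInfix⟩, hnodup.sublist (hprefix.sublist.map _)⟩
    · obtain ⟨K, w, hKL, hK⟩ := ih h.of_cons hnodup
      exact ⟨K, w, hKL.trans (List.suffix_cons d L).isInfix, hK⟩

/-! ### Walks of positive length -/

/-- The nonempty list of darts `L` as a `Multigraph.Walk`. -/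
def IsWalk.toWalk (h : G.IsWalk u L v) (hne : L ≠ []) : G.Walk where
  len := L.length
  len_pos := List.length_pos_of_ne_nil hne
  verts i := (u :: L.map Dart.snd)[(i : ℕ)]'(by simpa using i.is_le)
  edges i := L[i].edge
  valid i := by
    have hfst : (u :: L.map Dart.snd)[(i : ℕ)]'(by simp) = L[i].fst := by
      simp [← h.map_fst_concat]
    simpa [hfst] using L[i].ends_edge

lemma IsWalk.toWalk_verts_castSucc (h : G.IsWalk u L v) (hne : L ≠ []) (i : Fin L.length) :
    (h.toWalk hne).verts i.castSucc = L[i].fst := by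
  simp [toWalk, ← h.map_fst_concat]

lemma IsWalk.toWalk_verts_mem (h : G.IsWalk u L v) (hne : L ≠ []) (i : Fin (L.length + 1)) :
    (h.toWalk hne).verts i ∈ u :: L.map Dart.snd :=
  List.getElem_mem _

lemma IsWalk.toWalk_start (h : G.IsWalk u L v) (hne : L ≠ []) : (h.toWalk hne).start = u := rfl

lemma IsWalk.toWalk_finish (h : G.IsWalk u L v) (hne : L ≠ []) : (h.toWalk hne).finish = v := by
  simp [toWalk, Walk.finish, ← h.map_fst_concat]

lemma IsWalk.sum_toWalk (h : G.IsWalk u L v) (hne : L ≠ []) (x : V → ℝ) :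
    ∑ i, x ((h.toWalk hne).verts i) = x u + (L.map fun d => x d.snd).sum := by
  rw [← Fin.sum_univ_fun_getElem]
  refine (Fin.sum_univ_succ _).trans ?_
  simp only [toWalk, Fin.val_zero, Fin.val_succ, List.getElem_cons_zero, List.getElem_cons_succ,
    List.getElem_map, Fin.getElem_fin]
  rfl

lemma IsWalk.reach {X : Set V} {F : Set E} (h : G.IsWalk u L v) (hu : u ∉ X)
    (hX : ∀ d ∈ L, d.snd ∉ X) (hF : ∀ d ∈ L, d.edge ∉ F) : G.Reach X F u v := by
  by_cases hne : L = []
  · subst hne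
    exact .inl h
  · refine .inr ⟨h.toWalk hne, fun i => ?_, fun j => hF _ (List.getElem_mem _),
      h.toWalk_start hne, h.toWalk_finish hne⟩
    have hverts : ∀ w ∈ u :: L.map Dart.snd, w ∉ X := by simpa [hu] using hX
    exact hverts _ (h.toWalk_verts_mem hne i)

lemma isWalk_ofFn {n : ℕ} {f : Fin (n + 1) → V} {D : Fin n → G.Dart}
    (hfst : ∀ i, (D i).fst = f i.castSucc) (hsnd : ∀ i, (D i).snd = f i.succ) :
    G.IsWalk (f 0) (List.ofFn D) (f (Fin.last n)) := by
  induction n with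
  | zero => rfl
  | succ n ih =>
    rw [List.ofFn_succ]
    refine ⟨hfst 0, ?_⟩
    rw [hsnd 0]
    exact ih (f := fun i => f i.succ) (fun i => hfst i.succ) fun i => hsnd i.succ

namespace Walk

variable (W : G.Walk)

/-- The `i`-th edge of a walk, oriented along the walk. -/
def dart (i : Fin W.len) : G.Dart := ⟨W.verts i.castSucc, W.edges i, W.verts i.succ, W.valid i⟩

/-- The list of the oriented edges of a walk. -/
def darts : List G.Dart := List.ofFn W.dart

variable {W}

lemma isWalk_darts : G.IsWalk W.start W.darts W.finish :=
  isWalk_ofFn (f := W.verts) (fun _ => rfl) fun _ => rfl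

lemma mem_darts : d ∈ W.darts ↔ ∃ i, W.dart i = d := by simp [darts]

lemma darts_ne_nil : W.darts ≠ [] := by
  simpa [darts] using W.len_pos.ne'

lemma IsCycle.isCircuit_darts (hW : W.IsCycle) : G.IsCircuit W.start W.darts := by
  refine ⟨?_, darts_ne_nil, ?_⟩
  · simpa only [hW.1] using W.isWalk_darts
  · rw [darts, List.map_ofFn]
    exact List.nodup_ofFn.2 hW.2.1

end Walk

lemma IsReducedWalk.isCycle_toWalk (h : G.IsReducedWalk u L u) (hne : L ≠ [])
    (hL : (L.map Dart.snd).Nodup) : (h.isWalk.toWalk hne).IsCycle := by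
  have hfst : (L.map Dart.fst).Nodup := h.isWalk.map_fst_perm_map_snd.nodup_iff.2 hL
  have hedge : (L.map Dart.edge).Nodup := h.nodup_edge hL
  rw [← List.ofFn_getElem_eq_map, List.nodup_ofFn] at hfst hedge
  refine ⟨(h.isWalk.toWalk_finish hne).symm, hedge, ?_⟩
  exact (funext (h.isWalk.toWalk_verts_castSucc hne) : _ = fun i : Fin L.length => L[i].fst) ▸ hfst

lemma IsFVS.exists_mem {S : Set V} (hS : G.IsFVS S) (h : G.IsReducedWalk u L u) (hne : L ≠ []) :
    ∃ d ∈ L, d.snd ∈ S := by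
  have hdup : ¬ (u :: L.map Dart.snd).Nodup := fun hnodup =>
    (List.nodup_cons.1 hnodup).1 (h.isWalk.mem_map_snd hne)
  obtain ⟨K, w, hKL, hKne, hK, hKnodup⟩ := h.exists_infix_closed hdup
  obtain ⟨i, hi⟩ := hS _ (hK.isCycle_toWalk hKne hKnodup)
  have hmem : (hK.isWalk.toWalk hKne).verts i ∈ K.map Dart.snd := by
    rcases List.mem_cons.1 (hK.isWalk.toWalk_verts_mem hKne i) with hw | hmem
    · exact hw.symm ▸ hK.isWalk.mem_map_snd hKne
    · exact hmem
  obtain ⟨d, hd, hdi⟩ := List.mem_map.1 hmem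
  exact ⟨d, hKL.subset hd, hdi ▸ hi⟩

lemma isFVS_of_forall_isCircuit {S : Set V}
    (h : ∀ u L, G.IsCircuit u L → ∃ d ∈ L, d.snd ∈ S) : G.IsFVS S := by
  intro W hW
  obtain ⟨d, hd, hdS⟩ := h _ _ hW.isCircuit_darts
  obtain ⟨i, rfl⟩ := Walk.mem_darts.1 hd
  exact ⟨i.succ, hdS⟩

lemma card_edge_le_two (hL : L.Nodup) (e : E) :
    Nat.card {i : Fin L.length // L[i].edge = e} ≤ 2 := by
  classical
  by_cases he : ∃ d ∈ L, d.edge = e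
  · obtain ⟨d, -, rfl⟩ := he
    let f : {i : Fin L.length // L[i].edge = d.edge} → ({d, d.symm} : Finset G.Dart) := fun i =>
      ⟨L[i.1], by simpa using Dart.eq_or_eq_symm_of_edge_eq i.2⟩
    have hf : Function.Injective f := fun i j hij =>
      Subtype.ext (List.nodup_iff_injective_get.1 hL (congrArg Subtype.val hij))
    calc _ ≤ Nat.card ({d, d.symm} : Finset G.Dart) := Nat.card_le_card_of_injective f hf
      _ ≤ 2 := by rw [Nat.card_eq_finsetCard]; exact Finset.card_le_two
  · have : IsEmpty {i : Fin L.length // L[i].edge = e} :=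
      ⟨fun i => he ⟨_, List.getElem_mem _, i.2⟩⟩
    simp

lemma IsReducedWalk.isSCycle_toWalk (h : G.IsReducedWalk s (d :: L) s) (hL : (d :: L).Nodup)
    (hs : ∀ f ∈ L, f.fst ≠ s) : (h.isWalk.toWalk (List.cons_ne_nil d L)).IsSCycle s := by
  have hne := List.cons_ne_nil d L
  refine ⟨rfl, h.isWalk.toWalk_finish hne, fun i hi hilast => ?_, fun i j hij => ?_,
    card_edge_le_two hL⟩
  · obtain ⟨j, rfl⟩ := Fin.exists_castSucc_eq.2 hilast
    refine (h.isWalk.toWalk_verts_castSucc hne j).trans_ne ?_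
    obtain ⟨k, rfl⟩ := Fin.exists_succ_eq.2 (show j ≠ (0 : Fin (L.length + 1)) by
      rintro rfl; exact hi rfl)
    exact hs _ (List.getElem_mem _)
  · have hlt : (i : ℕ) + 1 < (d :: L).length := hij ▸ j.2
    obtain rfl : j = ⟨i + 1, hlt⟩ := Fin.ext hij.symm
    exact List.isChain_iff_getElem.1 h.isChain i hlt

lemma IsSCycleCover.one_le_sum {x : V → ℝ} (hx : G.IsSCycleCover s x)
    (h : G.IsReducedWalk s L s) (hne : L ≠ []) : 1 ≤ (L.map fun d => x d.snd).sum := by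
  obtain ⟨d, M, rfl⟩ := List.exists_cons_of_ne_nil hne
  obtain ⟨K, w, hKM, hK, hws, hKs⟩ := h.isWalk.2.exists_prefix_not (· ≠ s) (not_not.2 rfl)
  rw [not_not.1 hws] at hK
  have hprefix : d :: K <+: d :: M := List.cons_prefix_cons.2 ⟨rfl, hKM⟩
  have hred : G.IsReducedWalk s (d :: K) s := ⟨⟨h.isWalk.1, hK⟩, h.isChain.prefix hprefix⟩
  obtain ⟨L', hsub, hhead, hnodup, hL'⟩ := hred.exists_nodup_sublist
  obtain ⟨K', rfl⟩ := List.head?_eq_some_iff.1 hhead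
  have hK' : K'.Sublist K := by simpa using hsub
  have hcycle := hL'.isSCycle_toWalk hnodup fun f hf =>
    hKs f (hK'.subset hf)
  have hsum := hx.2.2 _ hcycle
  rw [IsWalk.sum_toWalk, hx.2.1, zero_add] at hsum
  refine hsum.trans (((hsub.trans hprefix.sublist).map _).sum_le_sum fun r hr => ?_)
  obtain ⟨f, -, rfl⟩ := List.mem_map.1 hr
  exact hx.1 _

/-! ### Reachability and ears -/

/-- The vertices that can be reached from `s` by walks all of whose later vertices lie in `A`. -/
def reachSet (G : Multigraph V E) (A : Set V) (s : V) : Set V :=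
  {v | Relation.ReflTransGen (fun u w => w ∈ A ∧ ∃ e, G.ends e = s(u, w)) s v}

variable {C S X T : Set V} {x : V → ℝ}

lemma self_mem_reachSet (G : Multigraph V E) (A : Set V) (s : V) : s ∈ G.reachSet A s :=
  Relation.ReflTransGen.refl

lemma Dart.snd_mem_reachSet (hd : d.fst ∈ G.reachSet C s) (hC : d.snd ∈ C) :
    d.snd ∈ G.reachSet C s :=
  Relation.ReflTransGen.tail hd ⟨hC, d.edge, d.ends_edge⟩

lemma reachSet_subset : G.reachSet C s ⊆ insert s C := by
  rintro v hv
  rcases Relation.ReflTransGen.cases_tail hv with rfl | ⟨u, -, hC, -⟩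
  exacts [.inl rfl, .inr hC]

lemma reachSet_mono (h : C ⊆ T) : G.reachSet C s ⊆ G.reachSet T s :=
  fun v hv => Relation.ReflTransGen.mono (fun _ _ hstep => ⟨h hstep.1, hstep.2⟩) s v hv

lemma exists_dart_of_not_mem_reachSet_diff (hv : v ∈ G.reachSet C s)
    (hvT : v ∉ G.reachSet (C \ T) s) :
    ∃ d : G.Dart, d.fst ∈ G.reachSet (C \ T) s ∧ d.snd ∈ T := by
  induction hv with
  | refl => exact absurd (self_mem_reachSet G _ s) hvT
  | @tail u w _ hstep ih =>
    by_cases hu : u ∈ G.reachSet (C \ T) s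
    · obtain ⟨hC, e, he⟩ := hstep
      refine ⟨⟨u, e, w, he⟩, hu, ?_⟩
      by_contra hT
      exact hvT (Dart.snd_mem_reachSet (d := ⟨u, e, w, he⟩) hu ⟨hC, hT⟩)
    · exact ih hu

lemma IsReducedWalk.exists_subset_cons (h : G.IsReducedWalk d.snd L v) :
    ∃ L', G.IsReducedWalk d.fst L' v ∧ L' ⊆ d :: L := by
  cases L with
  | nil => exact ⟨[d], ⟨⟨rfl, h.isWalk⟩, List.isChain_singleton d⟩, List.Subset.refl _⟩
  | cons f M =>
    by_cases hedge : d.edge = f.edge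
    · have hsnd : f.snd = d.fst := by
        rcases Dart.eq_or_eq_symm_of_edge_eq hedge with rfl | rfl
        exacts [h.isWalk.1.symm, rfl]
      exact ⟨M, hsnd ▸ h.of_cons, fun g hg => by simp [hg]⟩
    · exact ⟨d :: f :: M, ⟨⟨rfl, h.isWalk⟩, List.isChain_cons_cons.2 ⟨hedge, h.isChain⟩⟩,
        List.Subset.refl _⟩

lemma exists_isReducedWalk_of_mem_reachSet (hv : v ∈ G.reachSet C s) :
    ∃ P, G.IsReducedWalk v P s ∧ ∀ d ∈ P, d.fst ∈ G.reachSet C s ∧ d.snd ∈ G.reachSet C s := by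
  induction hv with
  | refl => exact ⟨[], ⟨rfl, List.isChain_nil⟩, by simp⟩
  | @tail u w hu hstep ih =>
    obtain ⟨P, hP, hPC⟩ := ih
    obtain ⟨hC, e, he⟩ := hstep
    have hw : w ∈ G.reachSet C s := Relation.ReflTransGen.tail hu ⟨hC, e, he⟩
    obtain ⟨P', hP', hsub⟩ :=
      hP.exists_subset_cons (d := Dart.symm ⟨u, e, w, he⟩)
    refine ⟨P', hP', fun d hd => ?_⟩
    rcases List.mem_cons.1 (hsub hd) with rfl | hdP
    exacts [⟨hw, hu⟩, hPC d hdP]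

/-- `G.IsEar R a L b`: the list `L` is a nonempty walk without U-turns from `a ∈ R` to `b ∈ R` none
of whose edges has both endpoints in `R`. -/
structure IsEar (G : Multigraph V E) (R : Set V) (a : V) (L : List G.Dart) (b : V) : Prop where
  isReducedWalk : G.IsReducedWalk a L b
  ne_nil : L ≠ []
  left_mem : a ∈ R
  right_mem : b ∈ R
  not_mem : ∀ d ∈ L, d.fst ∉ R ∨ d.snd ∉ R

lemma IsEar.exists_isReducedWalk (h : G.IsEar (G.reachSet C s) a L b) :
    ∃ P Q, G.IsReducedWalk s (P ++ L ++ Q) s ∧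
      (∀ d ∈ P, d.snd ∈ G.reachSet C s) ∧ ∀ d ∈ Q, d.snd ∈ G.reachSet C s := by
  obtain ⟨P, hP, hPC⟩ := exists_isReducedWalk_of_mem_reachSet h.left_mem
  obtain ⟨Q, hQ, hQC⟩ := exists_isReducedWalk_of_mem_reachSet h.right_mem
  have hdisj : ∀ d : G.Dart, d.fst ∈ G.reachSet C s ∧ d.snd ∈ G.reachSet C s →
      ∀ f ∈ L, d.edge ≠ f.edge := by
    rintro d ⟨hfst, hsnd⟩ f hf hedge
    rcases Dart.eq_or_eq_symm_of_edge_eq hedge with rfl | rfl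
    exacts [(h.not_mem d hf).elim (· hfst) (· hsnd), (h.not_mem f hf).elim (· hsnd) (· hfst)]
  have hPC' : ∀ d ∈ (P.map Dart.symm).reverse,
      d.fst ∈ G.reachSet C s ∧ d.snd ∈ G.reachSet C s := by
    intro d hd
    obtain ⟨f, hf, rfl⟩ := List.mem_map.1 (List.mem_reverse.1 hd)
    exact (hPC f hf).symm
  exact ⟨_, Q, hP.reverse.append_append h.isReducedWalk hQ h.ne_nil
      (fun d hd => hdisj d (hPC' d hd)) (fun d hd f hf => (hdisj f (hQC f hf) d hd).symm),
    fun d hd => (hPC' d hd).2, fun d hd => (hQC d hd).2⟩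

lemma IsFVS.exists_mem_of_isEar (hS : G.IsFVS S) (hs : s ∉ S) (hC : Disjoint C S)
    (h : G.IsEar (G.reachSet C s) a L b) : ∃ d ∈ L, d.snd ∈ S := by
  obtain ⟨P, Q, hwalk, hP, hQ⟩ := h.exists_isReducedWalk
  have hR : ∀ v ∈ G.reachSet C s, v ∉ S := fun v hv =>
    (reachSet_subset hv).elim (fun hvs => hvs ▸ hs) fun hvC => hC.notMem_of_mem_left hvC
  obtain ⟨d, hd, hdS⟩ := hS.exists_mem hwalk (by simp [h.ne_nil])
  rcases List.mem_append.1 hd with hd | hd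
  · rcases List.mem_append.1 hd with hd | hd
    exacts [absurd hdS (hR _ (hP d hd)), ⟨d, hd, hdS⟩]
  · exact absurd hdS (hR _ (hQ d hd))

lemma exists_ne_zero_of_one_le_sum (h : 1 ≤ (L.map fun d => x d.snd).sum) :
    ∃ d ∈ L, x d.snd ≠ 0 := by
  by_contra! hzero
  rw [List.sum_eq_zero (List.forall_mem_map.2 hzero)] at h
  norm_num at h

lemma IsSCycleCover.eq_zero_of_mem_reachSet (hx : G.IsSCycleCover s x) (hC : ∀ v ∈ C, x v = 0)
    (hv : v ∈ G.reachSet C s) : x v = 0 := by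
  rcases reachSet_subset hv with rfl | hvC
  exacts [hx.2.1, hC v hvC]

lemma IsSCycleCover.one_le_sum_of_isEar (hx : G.IsSCycleCover s x) (hC : ∀ v ∈ C, x v = 0)
    (h : G.IsEar (G.reachSet C s) a L b) : 1 ≤ (L.map fun d => x d.snd).sum := by
  obtain ⟨P, Q, hwalk, hP, hQ⟩ := h.exists_isReducedWalk
  have hsum_zero : ∀ K : List G.Dart, (∀ d ∈ K, d.snd ∈ G.reachSet C s) →
      (K.map fun d => x d.snd).sum = 0 := fun K hK =>
    List.sum_eq_zero (List.forall_mem_map.2 fun d hd => hx.eq_zero_of_mem_reachSet hC (hK d hd))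
  simpa [hsum_zero P hP, hsum_zero Q hQ] using hx.one_le_sum hwalk (by simp [h.ne_nil])

lemma IsCircuit.exists_isEar {R : Set V} (hL : G.IsCircuit u L) (hR : ∀ d ∈ L, d.snd ∉ R)
    (hd : d.fst ∈ R) (hdL : d.snd ∈ L.map Dart.snd) :
    ∃ L', L'.Perm L ∧ G.IsEar R d.fst ([d] ++ L' ++ [d.symm]) d.fst := by
  obtain ⟨L', hL', hperm⟩ := hL.exists_perm hdL
  have hR' : ∀ f ∈ L', f.fst ∉ R ∧ f.snd ∉ R := fun f hf =>
    ⟨hL.isWalk.forall_fst_of_forall_snd (p := (· ∉ R)) hR f (hperm.subset hf),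
      hR f (hperm.subset hf)⟩
  have hdR : d.snd ∉ R := fun h => by
    obtain ⟨f, hf, hfd⟩ := List.mem_map.1 hdL
    exact hR f hf (hfd ▸ h)
  have hne : ∀ f ∈ L', d.edge ≠ f.edge := by
    intro f hf hedge
    rcases Dart.eq_or_eq_symm_of_edge_eq hedge with rfl | rfl
    exacts [(hR' d hf).1 hd, (hR' f hf).2 hd]
  refine ⟨L', hperm, (isReducedWalk_singleton d).append_append hL'.isReducedWalk
    (isReducedWalk_singleton d.symm) hL'.ne_nil (by simpa using hne)
    (fun f hf => by simpa [Dart.symm] using (hne f hf).symm), by simp, hd, hd, fun f hf => ?_⟩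
  simp only [List.mem_append, List.mem_singleton] at hf
  rcases hf with (rfl | hf) | rfl
  exacts [.inr hdR, .inl (hR' f hf).1, .inl hdR]

lemma IsCircuit.exists_mem_not_mem_reachSet (hL : G.IsCircuit u L) (hx : G.IsSCycleCover s x)
    (hC : ∀ v ∈ C, x v = 0) : ∃ d ∈ L, d.snd ∉ G.reachSet C s := by
  by_contra! hsub
  let T : Set V := {v | v ∈ L.map Dart.snd}
  have hzero : ∀ v ∈ T, x v = 0 := List.forall_mem_map.2 fun d hd =>
    hx.eq_zero_of_mem_reachSet hC (hsub d hd)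
  by_cases hs : s ∈ T
  -- The circuit rotated to start at `s` is itself closed at `s`.
  · obtain ⟨L', hL', hperm⟩ := hL.exists_perm hs
    obtain ⟨d, hd, hxd⟩ : ∃ d ∈ L', x d.snd ≠ 0 :=
      exists_ne_zero_of_one_le_sum (hx.one_le_sum hL'.isReducedWalk hL'.ne_nil)
    exact hxd (hzero _ (List.mem_map_of_mem (hperm.subset hd)))
  -- Otherwise walk from `s` to the circuit, around it, and back.
  · obtain ⟨d₀, hd₀⟩ := List.exists_mem_of_ne_nil L hL.ne_nil
    have hdisj : ∀ d ∈ L, d.snd ∉ G.reachSet (C \ T) s := fun d hd hR =>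
      (reachSet_subset hR).elim (fun h => hs (h ▸ List.mem_map_of_mem hd)) fun hmem =>
        hmem.2 (List.mem_map_of_mem hd)
    obtain ⟨d, hdfst, hdsnd⟩ :=
      exists_dart_of_not_mem_reachSet_diff (hsub d₀ hd₀) (hdisj d₀ hd₀)
    obtain ⟨L', hperm, hear⟩ := hL.exists_isEar hdisj hdfst hdsnd
    obtain ⟨f, hf, hxf⟩ :=
      exists_ne_zero_of_one_le_sum (hx.one_le_sum_of_isEar (fun v hv => hC v hv.1) hear)
    simp only [List.mem_append, List.mem_singleton] at hf
    rcases hf with (rfl | hf) | rfl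
    · exact hxf (hzero _ hdsnd)
    · exact hxf (hzero _ (List.mem_map_of_mem (hperm.subset hf)))
    · exact hxf (hx.eq_zero_of_mem_reachSet (fun v hv => hC v hv.1) hdfst)

/-! ### Covers supported on the boundary of a vertex set -/

/-- The edges joining a vertex of `R` to `v`. -/
def edgesTo (G : Multigraph V E) (R : Set V) (v : V) : Set E := {e | ∃ a ∈ R, G.ends e = s(a, v)}

lemma exists_isEar_of_nontrivial_edgesTo {R : Set V} (hv : v ∉ R)
    (h : (G.edgesTo R v).Nontrivial) :
    ∃ a b d d', G.IsEar R a [d, d'] b ∧ d.snd = v ∧ d'.snd = b := by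
  obtain ⟨e, ⟨a, ha, he⟩, e', ⟨b, hb, he'⟩, hne⟩ := h
  refine ⟨a, b, ⟨a, e, v, he⟩, Dart.symm ⟨b, e', v, he'⟩, ⟨⟨⟨rfl, rfl, rfl⟩, ?_⟩, by simp, ha, hb,
    ?_⟩, rfl, rfl⟩
  · exact List.isChain_pair.2 hne
  · simp [Dart.symm, hv]

lemma IsSCycleCover.one_le_of_nontrivial_edgesTo (hx : G.IsSCycleCover s x)
    (hC : ∀ v ∈ C, x v = 0) (hv : v ∉ G.reachSet C s)
    (h : (G.edgesTo (G.reachSet C s) v).Nontrivial) : 1 ≤ x v := by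
  obtain ⟨a, b, d, d', hear, rfl, rfl⟩ := exists_isEar_of_nontrivial_edgesTo hv h
  simpa [hx.eq_zero_of_mem_reachSet hC hear.right_mem] using hx.one_le_sum_of_isEar hC hear

lemma IsFVS.mem_of_nontrivial_edgesTo (hS : G.IsFVS S) (hs : s ∉ S) (hC : Disjoint C S)
    (hv : v ∉ G.reachSet C s) (h : (G.edgesTo (G.reachSet C s) v).Nontrivial) : v ∈ S := by
  obtain ⟨a, b, d, d', hear, rfl, rfl⟩ := exists_isEar_of_nontrivial_edgesTo hv h
  have hd' : d'.snd ∉ S := (reachSet_subset hear.right_mem).elim (fun h => h ▸ hs)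
    fun h => hC.notMem_of_mem_left h
  simpa [hd'] using hS.exists_mem_of_isEar hs hC hear

open Classical in
/-- The function that vanishes on `R`, is `1` on the other vertices with at least two edges to `R`
and `1/2` on those with exactly one edge to `R`. It is an `s`-cycle cover as soon as `s ∈ R` and
every `s`-cycle leaves `R`. -/
noncomputable def boundaryCover (G : Multigraph V E) (R : Set V) (v : V) : ℝ :=
  if v ∈ R then 0
  else if (G.edgesTo R v).Nontrivial then 1
  else if (G.edgesTo R v).Nonempty then 1 / 2 else 0

lemma boundaryCover_nonneg (G : Multigraph V E) (R : Set V) (v : V) : 0 ≤ G.boundaryCover R v := by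
  unfold boundaryCover
  split_ifs <;> norm_num

lemma boundaryCover_of_nontrivial {R : Set V} (hv : v ∉ R) (h : (G.edgesTo R v).Nontrivial) :
    G.boundaryCover R v = 1 := by
  simp [boundaryCover, hv, h]

lemma half_le_boundaryCover {R : Set V} (hv : v ∉ R) (h : (G.edgesTo R v).Nonempty) :
    1 / 2 ≤ G.boundaryCover R v := by
  simp only [boundaryCover, hv, h, if_true, if_false]
  split_ifs <;> norm_num

lemma boundaryCover_le_half {R : Set V} (h : ¬ (G.edgesTo R v).Nontrivial) :
    G.boundaryCover R v ≤ 1 / 2 := by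
  simp only [boundaryCover, h, if_false]
  split_ifs <;> norm_num

lemma boundaryCover_of_edgesTo_eq_empty {R : Set V} (h : G.edgesTo R v = ∅) :
    G.boundaryCover R v = 0 := by
  simp [boundaryCover, h]

lemma exists_castSucc_and_not_succ {n : ℕ} {p : Fin (n + 1) → Prop} {i : Fin (n + 1)} (h0 : p 0)
    (hi : ¬ p i) : ∃ j : Fin n, p j.castSucc ∧ ¬ p j.succ := by
  by_contra! h
  exact hi (Fin.induction h0 h i)

lemma exists_not_castSucc_and_succ {n : ℕ} {p : Fin (n + 1) → Prop} {i : Fin (n + 1)}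
    (hlast : p (Fin.last n)) (hi : ¬ p i) : ∃ j : Fin n, ¬ p j.castSucc ∧ p j.succ := by
  by_contra! h
  exact hi (Fin.reverseInduction hlast (fun j => not_imp_not.1 (h j)) i)

/-- An `s`-cycle leaves `R` and enters it again; if both happen at a single vertex, then this vertex
has two edges to `R` because `s`-cycles have no U-turns. -/
lemma isSCycleCover_boundaryCover {R : Set V} (hs : s ∈ R)
    (hR : ∀ W : G.Walk, W.IsSCycle s → ∃ i, W.verts i ∉ R) :
    G.IsSCycleCover s (G.boundaryCover R) := by
  refine ⟨G.boundaryCover_nonneg R, by simp [boundaryCover, hs], fun W hW => ?_⟩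
  obtain ⟨i, hi⟩ := hR W hW
  have hstart : W.start ∈ R := hW.1 ▸ hs
  have hfinish : W.finish ∈ R := hW.2.1 ▸ hs
  obtain ⟨j, hj, hj'⟩ := exists_castSucc_and_not_succ (p := (W.verts · ∈ R)) hstart hi
  obtain ⟨k, hk, hk'⟩ := exists_not_castSucc_and_succ (p := (W.verts · ∈ R)) hfinish hi
  have hej : W.edges j ∈ G.edgesTo R (W.verts j.succ) := ⟨_, hj, W.valid j⟩
  have hek : W.edges k ∈ G.edgesTo R (W.verts k.castSucc) :=
    ⟨_, hk', (W.valid k).trans Sym2.eq_swap⟩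
  have hnonneg : ∀ l ∈ Finset.univ, 0 ≤ G.boundaryCover R (W.verts l) := fun l _ =>
    G.boundaryCover_nonneg R _
  by_cases hjk : j.succ = k.castSucc
  · have hne : W.edges j ≠ W.edges k := hW.2.2.2.1 j k (congrArg Fin.val hjk)
    rw [← boundaryCover_of_nontrivial hj' ⟨_, hej, _, hjk ▸ hek, hne⟩]
    exact Finset.single_le_sum hnonneg (Finset.mem_univ j.succ)
  · calc (1 : ℝ) = 1 / 2 + 1 / 2 := by norm_num
      _ ≤ G.boundaryCover R (W.verts j.succ) + G.boundaryCover R (W.verts k.castSucc) :=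
        add_le_add (half_le_boundaryCover hj' ⟨_, hej⟩) (half_le_boundaryCover hk ⟨_, hek⟩)
      _ ≤ ∑ l, G.boundaryCover R (W.verts l) :=
        Finset.add_le_sum hnonneg (Finset.mem_univ _) (Finset.mem_univ _) hjk

/-! ### Exchanging a feedback vertex set for one that contains `x⁻¹(1)` -/

/-- The feedback vertex set obtained from `S`, `s ∉ S`, by an exchange along `x`: the vertices of
`S` reached from `s` through zeros of `x` are traded for `x⁻¹(1)` and the vertices of value `1/2`
without an edge to the part of the zero region that is reached outside `S`. -/
def exchange (G : Multigraph V E) (s : V) (x : V → ℝ) (S : Set V) : Set V :=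
  S \ G.reachSet {v | x v = 0} s ∪ {v | x v = 1} ∪
    {v | x v = 1 / 2 ∧ G.edgesTo (G.reachSet ({v | x v = 0} \ S) s) v = ∅}

lemma not_mem_of_mem_reachSet_diff (hs : s ∉ S) (hv : v ∈ G.reachSet (C \ S) s) : v ∉ S := by
  rcases reachSet_subset hv with rfl | h
  exacts [hs, h.2]

lemma edgesTo_reachSet_eq_empty (hv : v ∈ C) (hvC : v ∉ G.reachSet C s) :
    G.edgesTo (G.reachSet C s) v = ∅ := by
  rw [Set.eq_empty_iff_forall_notMem]
  rintro e ⟨a, ha, he⟩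
  exact hvC (Dart.snd_mem_reachSet (d := ⟨a, e, v, he⟩) ha hv)

lemma edgesTo_mono {R R' : Set V} (h : R ⊆ R') : G.edgesTo R v ⊆ G.edgesTo R' v :=
  fun _ ⟨a, ha, he⟩ => ⟨a, h ha, he⟩

lemma IsSCycleCover.not_nontrivial_edgesTo (hx : G.IsSCycleCover s x) (hC : ∀ v ∈ C, x v = 0)
    (hv : v ∉ G.reachSet C s) (hxv : x v < 1) : ¬ (G.edgesTo (G.reachSet C s) v).Nontrivial :=
  fun h => hxv.not_ge (hx.one_le_of_nontrivial_edgesTo hC hv h)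

lemma IsSCycleCover.snd_mem_reachSet_of_not_mem_exchange (hx : G.IsSCycleCover s x)
    (hhalf : HalfIntegral x) (hfst : d.fst ∈ G.reachSet {v | x v = 0} s)
    (hfst' : d.fst ∉ G.reachSet ({v | x v = 0} \ S) s) (hsnd : d.snd ∉ G.exchange s x S) :
    d.snd ∈ G.reachSet {v | x v = 0} s := by
  rcases hhalf d.snd with h0 | hhalf | h1
  · exact Dart.snd_mem_reachSet hfst h0
  · have hR : d.snd ∉ G.reachSet {v | x v = 0} s := fun h => by
      linarith [hx.eq_zero_of_mem_reachSet (fun _ => id) h]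
    refine absurd ?_ (hx.not_nontrivial_edgesTo (fun _ => id) hR (by linarith))
    obtain ⟨e, a, ha, he⟩ : (G.edgesTo (G.reachSet ({v | x v = 0} \ S) s) d.snd).Nonempty :=
      Set.nonempty_iff_ne_empty.2 fun hempty => hsnd (.inr ⟨hhalf, hempty⟩)
    refine ⟨e, ⟨a, reachSet_mono Set.sdiff_subset ha, he⟩, d.edge, ⟨d.fst, hfst, d.ends_edge⟩, ?_⟩
    rintro rfl
    exact hfst' (Sym2.congr_left.1 (d.ends_edge.symm.trans he) ▸ ha)
  · exact absurd (.inl (.inr h1)) hsnd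

lemma IsCircuit.exists_isEar_of_mem {R R' : Set V} (hL : G.IsCircuit u L)
    (hRR : ∀ d : G.Dart, d.snd ∈ L.map Dart.snd → d.fst ∈ R \ R' → d.snd ∈ R)
    (hmem : ∃ d ∈ L, d.snd ∈ R \ R') (hnot_mem : ∃ d ∈ L, d.snd ∉ R) :
    ∃ a K b, G.IsEar R' a K b ∧ ∀ d ∈ K, d.snd ∈ R := by
  obtain ⟨f, hf, hfR⟩ := hnot_mem
  obtain ⟨d, hd, hdR⟩ := hmem
  obtain ⟨L', hL', hperm⟩ := hL.exists_perm (List.mem_map_of_mem hf)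
  obtain ⟨K, a, b, hKL, hne, hK, ha, hb, hpK⟩ :=
    hL'.isReducedWalk.exists_infix_of_mem (p := (· ∈ R \ R')) (fun h => hfR h.1)
      (fun h => hfR h.1) (hperm.mem_iff.2 hd) hdR
  have hKR : ∀ g ∈ K, g.fst ∈ R ∧ g.snd ∈ R := by
    intro g hg
    have hgL : g ∈ L := hperm.subset (hKL.subset hg)
    rcases hpK g hg with h | h
    · exact ⟨h.1, hRR g (List.mem_map_of_mem hgL) h⟩
    · exact ⟨hRR g.symm (hL.isWalk.map_fst_perm_map_snd.subset (List.mem_map_of_mem hgL)) h, h.1⟩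
  have haR : a ∈ R := by
    obtain ⟨g, M, rfl⟩ := List.exists_cons_of_ne_nil hne
    exact hK.isWalk.1 ▸ (hKR g List.mem_cons_self).1
  have hbR : b ∈ R := List.forall_mem_map.2 (fun g hg => (hKR g hg).2) b (hK.isWalk.mem_map_snd hne)
  exact ⟨a, K, b, ⟨hK, hne, not_not.1 fun h => ha ⟨haR, h⟩, not_not.1 fun h => hb ⟨hbR, h⟩,
    fun g hg => (hpK g hg).imp And.right And.right⟩, fun g hg => (hKR g hg).2⟩

/-- A cycle avoiding the exchanged set contains an ear over the region reached outside `S` on which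
`x` vanishes, against the covering property. -/
lemma isFVS_exchange (hx : G.IsSCycleCover s x) (hhalf : HalfIntegral x) (hS : G.IsFVS S)
    (hs : s ∉ S) : G.IsFVS (G.exchange s x S) := by
  refine isFVS_of_forall_isCircuit fun u L hL => ?_
  by_contra! hS'
  have hmem : ∃ d ∈ L, d.snd ∈
      G.reachSet {v | x v = 0} s \ G.reachSet ({v | x v = 0} \ S) s := by
    obtain ⟨d, hd, hdS⟩ := hS.exists_mem hL.isReducedWalk hL.ne_nil
    exact ⟨d, hd, not_not.1 fun h => hS' d hd (.inl (.inl ⟨hdS, h⟩)),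
      fun h => not_mem_of_mem_reachSet_diff hs h hdS⟩
  have hS'L : ∀ w ∈ L.map Dart.snd, w ∉ G.exchange s x S := List.forall_mem_map.2 hS'
  obtain ⟨a, K, b, hear, hK⟩ := hL.exists_isEar_of_mem
    (fun d hd hfst => hx.snd_mem_reachSet_of_not_mem_exchange hhalf hfst.1 hfst.2 (hS'L _ hd))
    hmem (hL.exists_mem_not_mem_reachSet hx fun _ => id)
  obtain ⟨d, hd, hxd⟩ :=
    exists_ne_zero_of_one_le_sum (hx.one_le_sum_of_isEar (fun _ hv => hv.1) hear)
  exact hxd (hx.eq_zero_of_mem_reachSet (fun _ => id) (hK d hd))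

lemma two_mul_boundaryCover_sub_le_of_eq_zero (hx : G.IsSCycleCover s x) (hs : s ∉ S)
    (hv : x v = 0) :
    2 * (G.boundaryCover (G.reachSet ({v | x v = 0} \ S) s) v - x v) ≤
      S.indicator 1 v - (G.exchange s x S).indicator 1 v := by
  have hzero : ∀ v ∈ {v | x v = 0} \ S, x v = 0 := fun _ hv => hv.1
  have hexchange : v ∈ G.exchange s x S ↔ v ∈ S ∧ v ∉ G.reachSet {v | x v = 0} s := by
    simp [exchange, hv]
  by_cases hvS : v ∈ S
  · by_cases hvR : v ∈ G.reachSet {v | x v = 0} s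
    · have hle := boundaryCover_le_half (hx.not_nontrivial_edgesTo hzero
        (fun h => not_mem_of_mem_reachSet_diff hs h hvS) (by linarith))
      simp only [hexchange, hvS, hvR, Set.indicator, not_true, and_false, if_true, if_false,
        Pi.one_apply]
      linarith
    · have hempty : G.edgesTo (G.reachSet ({v | x v = 0} \ S) s) v = ∅ :=
        Set.subset_eq_empty (edgesTo_mono (reachSet_mono Set.sdiff_subset))
          (edgesTo_reachSet_eq_empty (C := {v | x v = 0}) hv hvR)
      simp [Set.indicator, hexchange, hvS, hvR, hv, boundaryCover_of_edgesTo_eq_empty hempty]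
  · have hb : G.boundaryCover (G.reachSet ({v | x v = 0} \ S) s) v = 0 := by
      by_cases hvR : v ∈ G.reachSet ({v | x v = 0} \ S) s
      · simp [boundaryCover, hvR]
      · exact boundaryCover_of_edgesTo_eq_empty (edgesTo_reachSet_eq_empty ⟨hv, hvS⟩ hvR)
    simp [Set.indicator, hexchange, hvS, hv, hb]

lemma two_mul_boundaryCover_sub_le_of_eq_half (hx : G.IsSCycleCover s x) (hv : x v = 1 / 2) :
    2 * (G.boundaryCover (G.reachSet ({v | x v = 0} \ S) s) v - x v) ≤
      S.indicator 1 v - (G.exchange s x S).indicator 1 v := by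
  have hzero : ∀ v ∈ {v | x v = 0} \ S, x v = 0 := fun _ hv => hv.1
  have hvR : ∀ {C}, (∀ v ∈ C, x v = 0) → v ∉ G.reachSet C s := fun hC h => by
    linarith [hx.eq_zero_of_mem_reachSet hC h]
  by_cases hempty : G.edgesTo (G.reachSet ({v | x v = 0} \ S) s) v = ∅
  · have hmem : v ∈ G.exchange s x S := .inr ⟨hv, hempty⟩
    have hS_nonneg : 0 ≤ S.indicator (1 : V → ℝ) v := Set.indicator_nonneg (by simp) v
    rw [boundaryCover_of_edgesTo_eq_empty hempty, Set.indicator_of_mem hmem, Pi.one_apply]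
    linarith
  · have hle := boundaryCover_le_half
      (hx.not_nontrivial_edgesTo hzero (hvR hzero) (by linarith))
    have hvR₀ : v ∉ G.reachSet {v | x v = 0} s := hvR fun _ => id
    have hmem : v ∈ G.exchange s x S ↔ v ∈ S := by simp [exchange, hv, hempty, hvR₀]
    have heq : (G.exchange s x S).indicator (1 : V → ℝ) v = S.indicator 1 v := by
      by_cases hvS : v ∈ S <;> simp [hmem, hvS]
    linarith

lemma two_mul_boundaryCover_sub_le_of_eq_one (hx : G.IsSCycleCover s x) (hS : G.IsFVS S)
    (hs : s ∉ S) (hv : x v = 1) :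
    2 * (G.boundaryCover (G.reachSet ({v | x v = 0} \ S) s) v - x v) ≤
      S.indicator 1 v - (G.exchange s x S).indicator 1 v := by
  have hmem : v ∈ G.exchange s x S := .inl (.inr hv)
  have hvR : v ∉ G.reachSet ({v | x v = 0} \ S) s := fun h => by
    linarith [hx.eq_zero_of_mem_reachSet (fun _ hv => hv.1) h]
  rw [Set.indicator_of_mem hmem, Pi.one_apply, hv]
  by_cases hnon : (G.edgesTo (G.reachSet ({v | x v = 0} \ S) s) v).Nontrivial
  · have hvS : v ∈ S := hS.mem_of_nontrivial_edgesTo hs Set.disjoint_sdiff_left hvR hnon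
    simp [boundaryCover_of_nontrivial hvR hnon, hvS]
  · have hS_nonneg : 0 ≤ S.indicator (1 : V → ℝ) v := Set.indicator_nonneg (by simp) v
    linarith [boundaryCover_le_half hnon]

lemma two_mul_boundaryCover_sub_le (hx : G.IsSCycleCover s x) (hhalf : HalfIntegral x)
    (hS : G.IsFVS S) (hs : s ∉ S) (v : V) :
    2 * (G.boundaryCover (G.reachSet ({v | x v = 0} \ S) s) v - x v) ≤
      S.indicator 1 v - (G.exchange s x S).indicator 1 v := by
  rcases hhalf v with hv | hv | hv
  · exact two_mul_boundaryCover_sub_le_of_eq_zero hx hs hv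
  · exact two_mul_boundaryCover_sub_le_of_eq_half hx hv
  · exact two_mul_boundaryCover_sub_le_of_eq_one hx hS hs hv

lemma sum_indicator_one [Fintype V] (S : Set V) : ∑ v, S.indicator (1 : V → ℝ) v = S.ncard := by
  classical
  simp [Set.indicator_apply, Finset.sum_boole, Set.ncard_eq_toFinset_card']

lemma ncard_exchange_le [Fintype V] (hx : G.IsMinSCycleCover s x) (hhalf : HalfIntegral x)
    (hS : G.IsFVS S) (hs : s ∉ S) : (G.exchange s x S).ncard ≤ S.ncard := by
  have hcover : G.IsSCycleCover s
      (G.boundaryCover (G.reachSet ({v | x v = 0} \ S) s)) := by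
    refine isSCycleCover_boundaryCover (self_mem_reachSet _ _ _) fun W hW => ?_
    by_contra! hmem
    have hone := hx.1.2.2 W hW
    rw [Finset.sum_eq_zero fun i _ =>
      hx.1.eq_zero_of_mem_reachSet (fun _ hv => hv.1) (hmem i)] at hone
    norm_num at hone
  have hsum := Finset.sum_le_sum fun v (_ : v ∈ Finset.univ) =>
    two_mul_boundaryCover_sub_le hx.1 hhalf hS hs v
  rw [← Finset.mul_sum, Finset.sum_sub_distrib, Finset.sum_sub_distrib, sum_indicator_one,
    sum_indicator_one] at hsum
  have hmin := hx.2 _ hcover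
  exact_mod_cast (by linarith : ((G.exchange s x S).ncard : ℝ) ≤ S.ncard)

/-! ### The reduction -/

lemma IsCircuit.not_inB (hL : G.IsCircuit v L) (hX : ∀ d ∈ L, d.snd ∉ X) (hd : d ∈ L) :
    ¬ G.InB s X d.edge := by
  rintro ⟨u, hends, -, -, hs, hreach, -⟩
  obtain ⟨L', hL', hperm⟩ := hL.exists_perm_cons hd
  obtain ⟨hnot_mem, -⟩ := List.nodup_cons.1 hL'.nodup_edge
  have hedge : ∀ f ∈ L', f.edge ∉ ({d.edge} : Set E) := fun f hf hfd =>
    hnot_mem (hfd ▸ List.mem_map_of_mem hf)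
  have hX' : ∀ f ∈ L', f.snd ∉ X := fun f hf => hX f (hperm.subset (List.mem_cons_of_mem d hf))
  have hXfst : ∀ f ∈ L', f.fst ∉ X := fun f hf =>
    hL.isWalk.forall_fst_of_forall_snd (p := (· ∉ X)) hX f
      (hperm.subset (List.mem_cons_of_mem d hf))
  rcases Sym2.eq_iff.1 (d.ends_edge.symm.trans hends) with ⟨hfst, hsnd⟩ | ⟨hfst, hsnd⟩
  · have hwalk : G.IsWalk u L' s := hfst ▸ hsnd ▸ hL'.isWalk.2
    have hreverse : ∀ {p : G.Dart → Prop}, (∀ f ∈ L', p f.symm) →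
        ∀ f ∈ (L'.map Dart.symm).reverse, p f := fun hp f hf =>
      List.forall_mem_map.2 hp f (List.mem_reverse.1 hf)
    exact hreach (hwalk.reverse.reach hs (hreverse hXfst) (hreverse hedge))
  · have hwalk : G.IsWalk s L' u := hfst ▸ hsnd ▸ hL'.isWalk.2
    exact hreach (hwalk.reach hs hX' hedge)

lemma IsFVS.exists_verts_mem {E' : Type} {H : Multigraph V E'} (hS : H.IsFVS S) {W : G.Walk}
    (hW : W.IsCycle) {f : Fin W.len → E'} (hf : Function.Injective f)
    (hends : ∀ j, H.ends (f j) = G.ends (W.edges j)) : ∃ i, W.verts i ∈ S :=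
  hS ⟨W.len, W.len_pos, W.verts, f, fun j => (hends j).trans (W.valid j)⟩ ⟨hW.1, hf, hW.2.2⟩

lemma Walk.exists_verts_eq_of_mem_ends {W : G.Walk} {j : Fin W.len} (h : v ∈ G.ends (W.edges j)) :
    ∃ i, W.verts i = v := by
  rw [W.valid, Sym2.mem_iff] at h
  exact h.elim (fun h => ⟨_, h.symm⟩) fun h => ⟨_, h.symm⟩

lemma IsFVS.mem_or_mem_of_reduced (hS : (G.reduced s x).IsFVS S) (hv : x v = 1) :
    s ∈ S ∨ v ∈ S := by
  let d (i : Bool) : (G.reduced s x).Dart := ⟨s, .inr (⟨v, hv⟩, i), v, rfl⟩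
  have hwalk : (G.reduced s x).IsReducedWalk s [d true, (d false).symm] s :=
    ⟨⟨rfl, rfl, rfl⟩, List.isChain_pair.2 (by simp [d, Dart.symm])⟩
  simpa [d, Dart.symm, or_comm] using hS.exists_mem hwalk (by simp)

lemma IsFVS.of_reduced (hS : (G.reduced s x).IsFVS S) : G.IsFVS S := by
  intro W hW
  by_cases hB : ∃ j, G.InB s {v | x v = 1} (W.edges j)
  · obtain ⟨j, hj⟩ := hB
    obtain ⟨i, hi⟩ : ∃ i, x (W.verts i) = 1 := by
      by_contra! hX
      refine hW.isCircuit_darts.not_inB ?_ (Walk.mem_darts.2 ⟨j, rfl⟩) hj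
      intro d hd
      obtain ⟨i, rfl⟩ := Walk.mem_darts.1 hd
      exact hX i.succ
    obtain ⟨u, hends, -⟩ := hj
    obtain ⟨k, hk⟩ := Walk.exists_verts_eq_of_mem_ends (hends ▸ Sym2.mem_mk_left s u)
    exact (hS.mem_or_mem_of_reduced hi).elim (fun hs => ⟨k, hk ▸ hs⟩) fun hiS => ⟨i, hiS⟩
  · push Not at hB
    refine hS.exists_verts_mem hW (f := fun j => .inl ⟨W.edges j, hB j⟩) (fun i j hij => ?_)
      fun _ => rfl
    exact hW.2.1 (congrArg Subtype.val (Sum.inl.inj hij))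

lemma IsFVS.reduced (hS : G.IsFVS S) (h : s ∈ S ∨ {v | x v = 1} ⊆ S) :
    (G.reduced s x).IsFVS S := by
  intro W hW
  by_contra! hWS
  have hinl : ∀ j, ∃ e, W.edges j = .inl e := by
    intro j
    rcases hj : W.edges j with e | ⟨⟨v, hv⟩, i⟩
    · exact ⟨e, rfl⟩
    · have hmem : ∀ w ∈ s(s, v), w ∉ S := fun w hw => by
        obtain ⟨i, rfl⟩ := Walk.exists_verts_eq_of_mem_ends (W := W) (j := j) (v := w) (by rwa [hj])
        exact hWS i
      exact h.elim (fun hs => absurd hs (hmem s (Sym2.mem_mk_left s v)))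
        fun hX => absurd (hX hv) (hmem v (Sym2.mem_mk_right s v))
  choose f hf using hinl
  obtain ⟨i, hi⟩ := hS.exists_verts_mem hW (f := fun j => (f j).1)
    (fun i j hij => hW.2.1 (by rw [hf, hf, Subtype.ext hij])) (fun j => by rw [hf]; rfl)
  exact hWS i hi

lemma fvs_le_fvs_of_forall [Fintype V] {E' : Type} {H : Multigraph V E'}
    (h : ∀ S, H.IsFVS S → ∃ S', G.IsFVS S' ∧ S'.ncard ≤ S.ncard) : G.fvs ≤ H.fvs := by
  have huniv : H.IsFVS Set.univ := fun W _ => ⟨0, Set.mem_univ (W.verts 0)⟩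
  have hne : {n | ∃ S, H.IsFVS S ∧ S.ncard = n}.Nonempty := ⟨_, Set.univ, huniv, rfl⟩
  obtain ⟨S, hS, hcard⟩ := Nat.sInf_mem hne
  obtain ⟨S', hS', hle⟩ := h S hS
  calc
    G.fvs ≤ S'.ncard := Nat.sInf_le ⟨S', hS', rfl⟩
    _ ≤ S.ncard := hle
    _ = H.fvs := hcard

end Multigraph

theorem stmt6_reduced_fvs_eq_general {V E : Type} [Fintype V] (G : Multigraph V E) (s : V)
    (x : V → ℝ) (hx : G.IsMinSCycleCover s x) (hhalf : Multigraph.HalfIntegral x) :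
    G.fvs = (G.reduced s x).fvs := by
  refine le_antisymm (Multigraph.fvs_le_fvs_of_forall fun S hS => ⟨S, hS.of_reduced, le_rfl⟩)
    (Multigraph.fvs_le_fvs_of_forall fun S hS => ?_)
  by_cases hs : s ∈ S
  · exact ⟨S, hS.reduced (.inl hs), le_rfl⟩
  · have hX : {v | x v = 1} ⊆ G.exchange s x S := fun v hv => .inl (.inr hv)
    exact ⟨G.exchange s x S, (Multigraph.isFVS_exchange hx.1 hhalf hS hs).reduced (.inr hX),
      Multigraph.ncard_exchange_le hx hhalf hS hs⟩

/-- the `s`-cycle cover reduction preserves the minimum feedback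
vertex set size: `fvs(G) = fvs(G')`. -/
theorem stmt6_reduced_fvs_eq {V E : Type} [Fintype V] [Fintype E] (G : Multigraph V E)
    (hloop : G.LoopFree) (s : V) (x : V → ℝ)
    (hx : G.IsMinSCycleCover s x) (hhalf : Multigraph.HalfIntegral x) :
    G.fvs = (G.reduced s x).fvs :=
  stmt6_reduced_fvs_eq_general G s x hx hhalf
end

section
/- Let G=(V,E) be a multigraph without self-loops, let s ∈ V, let x be a half-integral minimum s-cycle cover of G, and let G'=(V,E') be the multigraph obtained from G by applying the s-cycle cover reduction with respect to s and x. Then x is also an s-cycle cover of G'; that is, for every s-cycle C of G' one has x(V(C)) ≥ 1. -/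
/-! Call a vertex light if `x v < 1`. An `s`-cycle of `G'` through a vertex that is not light is
covered by that vertex alone. An edge of `G'` between light vertices is not one of the inserted
edges, so any other `s`-cycle of `G'` already lives in `G`, where `x` covers it. -/

namespace Multigraph

variable {V E E' : Type} {G : Multigraph V E} {H : Multigraph V E'} {s : V} {x : V → ℝ}

namespace Walk

/-- The walk of `G` on the same vertices as the walk `W` of `H`, with its `i`-th edge replaced by
the parallel edge `f i` of `G`. The new edge may depend on the position and not only on
`W.edges i`, so that a correspondence defined only on the edges used by `W` can be applied. -/
def relabel (W : H.Walk) (f : Fin W.len → E)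
    (hf : ∀ i, G.ends (f i) = H.ends (W.edges i)) : G.Walk where
  len := W.len
  len_pos := W.len_pos
  verts := W.verts
  edges := f
  valid i := (hf i).trans (W.valid i)

theorem IsSCycle.relabel {W : H.Walk} (hW : W.IsSCycle s) {f : Fin W.len → E}
    (hf : ∀ i, G.ends (f i) = H.ends (W.edges i))
    (hinj : ∀ i j, f i = f j → W.edges i = W.edges j) : (W.relabel f hf).IsSCycle s := by
  obtain ⟨hstart, hfinish, hinterior, hturn, htwice⟩ := hW
  refine ⟨hstart, hfinish, hinterior, fun i j hij h ↦ hturn i j hij (hinj i j h), fun e ↦ ?_⟩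
  rcases isEmpty_or_nonempty {i // f i = e} with hunused | ⟨i, rfl⟩
  · exact (@Nat.card_of_isEmpty _ hunused).trans_le (Nat.zero_le 2)
  · have hfiber : Nat.card {j // f j = f i} ≤ Nat.card {j // W.edges j = W.edges i} :=
      Nat.card_mono (Set.toFinite _) fun j hj ↦ hinj j i hj
    exact hfiber.trans (htwice (W.edges i))

theorem forall_mem_ends_edges (W : H.Walk) {p : V → Prop} (hp : ∀ i, p (W.verts i))
    (i : Fin W.len) : ∀ v ∈ H.ends (W.edges i), p v := by
  rw [W.valid i]
  exact Sym2.ball.2 ⟨hp i.castSucc, hp i.succ⟩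

end Walk

theorem IsSCycleCover.of_lightEdge_embedding (hx : G.IsSCycleCover s x)
    (φ : {e : E' // ∀ v ∈ H.ends e, x v < 1} ↪ E) (hφ : ∀ e, G.ends (φ e) = H.ends e) :
    H.IsSCycleCover s x := by
  obtain ⟨hnonneg, hs, hcover⟩ := hx
  refine ⟨hnonneg, hs, fun W hW ↦ ?_⟩
  by_cases hlight : ∀ i, x (W.verts i) < 1
  · let e i : {e : E' // ∀ v ∈ H.ends e, x v < 1} :=
      ⟨W.edges i, W.forall_mem_ends_edges hlight i⟩
    exact hcover _ (hW.relabel (f := φ ∘ e) (fun i ↦ hφ (e i))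
      fun i j h ↦ congrArg Subtype.val (φ.injective h))
  · push Not at hlight
    obtain ⟨i, hi⟩ := hlight
    exact hi.trans (Finset.single_le_sum (f := fun j ↦ x (W.verts j))
      (fun j _ ↦ hnonneg _) (Finset.mem_univ i))

theorem not_forall_mem_ends_reduced_inr_lt_one (G : Multigraph V E) (s : V)
    (p : {v : V // x v = 1} × Bool) : ¬ ∀ v ∈ (G.reduced s x).ends (.inr p), x v < 1 :=
  fun hlight ↦ (hlight p.1 (Sym2.mem_mk_right s _)).ne p.1.2

/-- The edge of `G` underlying an edge of the reduced graph with two light ends;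
such an edge is never an inserted one. -/
def reducedLightEdge (G : Multigraph V E) (s : V) (x : V → ℝ) :
    {e // ∀ v ∈ (G.reduced s x).ends e, x v < 1} → E
  | ⟨.inl e, _⟩ => e
  | ⟨.inr p, hp⟩ => absurd hp (G.not_forall_mem_ends_reduced_inr_lt_one s p)

theorem reducedLightEdge_injective (G : Multigraph V E) (s : V) (x : V → ℝ) :
    Function.Injective (G.reducedLightEdge s x) := by
  rintro ⟨e | p, he⟩ ⟨e' | p', he'⟩ h
  · exact Subtype.ext (congrArg Sum.inl (Subtype.ext h))
  · exact absurd he' (G.not_forall_mem_ends_reduced_inr_lt_one s p')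
  all_goals exact absurd he (G.not_forall_mem_ends_reduced_inr_lt_one s p)

theorem ends_reducedLightEdge (G : Multigraph V E) (s : V) (x : V → ℝ)
    (e : {e // ∀ v ∈ (G.reduced s x).ends e, x v < 1}) :
    G.ends (G.reducedLightEdge s x e) = (G.reduced s x).ends e := by
  obtain ⟨e | p, he⟩ := e
  · rfl
  · exact absurd he (G.not_forall_mem_ends_reduced_inr_lt_one s p)

end Multigraph

theorem stmt8_reduced_isSCycleCover_general {V E : Type} (G : Multigraph V E) (s : V) (x : V → ℝ)
    (hx : G.IsSCycleCover s x) : (G.reduced s x).IsSCycleCover s x :=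
  hx.of_lightEdge_embedding ⟨G.reducedLightEdge s x, G.reducedLightEdge_injective s x⟩
    (G.ends_reducedLightEdge s x)

/-- `x` is still an `s`-cycle cover of the reduced graph `G'`. -/
theorem stmt8_reduced_isSCycleCover {V E : Type} [Fintype V] [Fintype E] (G : Multigraph V E)
    (hloop : G.LoopFree) (s : V) (x : V → ℝ)
    (hx : G.IsMinSCycleCover s x) (hhalf : Multigraph.HalfIntegral x) :
    (G.reduced s x).IsSCycleCover s x :=
  stmt8_reduced_isSCycleCover_general G s x hx.1
end
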